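/- (Algebraic core of Proposition 6.2 of the paper.) Assume Sξ = αξ for a real number α, and define Q := (1/2)(S∘φ - φ∘S) : T → T. Then φ∘Q + Q∘φ = 0 on T; that is, the star-Ricci operator of a star-Ricci soliton with potential ξ anti-commutes with φ. -/

import Mathlib

/-!
For endomorphisms `S` and `φ` one has `φ [S, φ] + [S, φ] φ = [S, φ²]`, so `Q = ½ [S, φ]`
anti-commutes with `φ` wherever `S` commutes with `φ²`. For an almost contact structure
`φ² = -1 + η ⊗ ξ`, and `S` commutes with `η ⊗ ξ` as soon as `ξ` is an eigenvector of `S` and `η` an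
eigenvector of its transpose, with the same eigenvalue. For a Hopf hypersurface the first is the
assumption `S ξ = α ξ`, and the second follows from it because `S` is self-adjoint.
-/

open RealInnerProductSpace

theorem mul_lie_add_lie_mul {A : Type*} [Ring A] (a b : A) :
    b * ⁅a, b⁆ + ⁅a, b⁆ * b = ⁅a, b * b⁆ := by
  simp only [Ring.lie_def]
  noncomm_ring

section AlmostContact

variable {R M : Type*} [CommRing R] [AddCommGroup M] [Module R M]

theorem lie_mul_self_apply_eq_zero_of_almostContact {S φ : Module.End R M} {η : M → R} {ξ x : M}
    {α : R} (hx : φ (φ x) = -x + η x • ξ) (hSx : φ (φ (S x)) = -S x + η (S x) • ξ)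
    (hξ : S ξ = α • ξ) (hη : η (S x) = α * η x) : ⁅S, φ * φ⁆ x = 0 :=
  calc
    ⁅S, φ * φ⁆ x = S (φ (φ x)) - φ (φ (S x)) := by
      simp only [Ring.lie_def, LinearMap.sub_apply, Module.End.mul_apply]
    _ = η x • α • ξ - (α * η x) • ξ := by
      rw [hx, hSx, hη, map_add, map_neg, map_smul, hξ, add_sub_add_left_eq_sub]
    _ = 0 := by rw [smul_smul, mul_comm, sub_self]

theorem apply_lie_add_lie_apply_eq_zero_of_almostContact {S φ : Module.End R M} {η : M → R}
    {ξ x : M} {α : R} (hx : φ (φ x) = -x + η x • ξ)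
    (hSx : φ (φ (S x)) = -S x + η (S x) • ξ) (hξ : S ξ = α • ξ) (hη : η (S x) = α * η x) :
    φ (⁅S, φ⁆ x) + ⁅S, φ⁆ (φ x) = 0 :=
  (LinearMap.congr_fun (mul_lie_add_lie_mul S φ) x).trans
    (lie_mul_self_apply_eq_zero_of_almostContact hx hSx hξ hη)

end AlmostContact

section Hypersurface

variable {V : Type*} [NormedAddCommGroup V] [InnerProductSpace ℝ V]

/-- An orthogonal complex structure: the pointwise datum of a Hermitian, in particular of a Kähler,
manifold. -/
structure IsOrthogonalComplexStructure (J : V →ₗ[ℝ] V) : Prop where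
  inner_map_map : ∀ x y, ⟪J x, J y⟫ = ⟪x, y⟫
  map_map : ∀ x, J (J x) = -x

/-- The Reeb vector `ξ` of a real hypersurface with normal `N`. -/
def reebVector (J : V →ₗ[ℝ] V) (N : V) : V := -J N

/-- The structure tensor `φ` induced on a real hypersurface with unit normal `N`, that is, the
tangential part of `J` on tangent vectors. It is encoded as an endomorphism of the whole ambient
space. -/
noncomputable def structureTensor (J : V →ₗ[ℝ] V) (N : V) : V →ₗ[ℝ] V :=
  J - (innerₗ V (reebVector J N)).smulRight N

theorem structureTensor_apply (J : V →ₗ[ℝ] V) (N x : V) :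
    structureTensor J N x = J x - ⟪x, reebVector J N⟫ • N := by
  rw [real_inner_comm]
  rfl

namespace IsOrthogonalComplexStructure

variable {J : V →ₗ[ℝ] V} (hJ : IsOrthogonalComplexStructure J)
include hJ

theorem inner_map_left (x y : V) : ⟪J x, y⟫ = -⟪x, J y⟫ := by
  rw [← hJ.inner_map_map x, hJ.map_map, inner_neg_right, neg_neg]

theorem inner_map_self (x : V) : ⟪J x, x⟫ = 0 := by
  have h := hJ.inner_map_left x x
  rw [real_inner_comm (J x) x] at h
  exact self_eq_neg.mp h

theorem inner_reebVector_normal (N : V) : ⟪reebVector J N, N⟫ = 0 := by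
  rw [reebVector, inner_neg_left, hJ.inner_map_self, neg_zero]

theorem inner_structureTensor_reebVector {N x : V} (hx : ⟪x, N⟫ = 0) :
    ⟪structureTensor J N x, reebVector J N⟫ = 0 := by
  have hJx : ⟪J x, reebVector J N⟫ = 0 := by
    rw [reebVector, inner_neg_right, hJ.inner_map_map, hx, neg_zero]
  rw [structureTensor_apply, inner_sub_left, hJx, real_inner_smul_left,
    real_inner_comm (reebVector J N) N, hJ.inner_reebVector_normal, mul_zero, sub_zero]

theorem structureTensor_structureTensor {N x : V} (hx : ⟪x, N⟫ = 0) :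
    structureTensor J N (structureTensor J N x) = -x + ⟪x, reebVector J N⟫ • reebVector J N :=
  calc
    structureTensor J N (structureTensor J N x) = J (structureTensor J N x) := by
      rw [structureTensor_apply J N (structureTensor J N x),
        hJ.inner_structureTensor_reebVector hx, zero_smul, sub_zero]
    _ = -x + ⟪x, reebVector J N⟫ • -J N := by
      rw [structureTensor_apply, map_sub, map_smul, hJ.map_map, smul_neg, sub_eq_add_neg]

end IsOrthogonalComplexStructure

theorem stmt12_general (J : V →ₗ[ℝ] V) (hJ : IsOrthogonalComplexStructure J)
    (N ξ : V) (hξ : ξ = -(J N)) (η : V → ℝ) (hη : ∀ X : V, η X = ⟪X, ξ⟫)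
    (φ : V → V) (hφ : ∀ X : V, φ X = J X - η X • N)
    (S : V →ₗ[ℝ] V) (hST : ∀ X : V, ⟪X, N⟫ = 0 → ⟪S X, N⟫ = 0)
    (α : ℝ) (hSξ : S ξ = α • ξ) (hηS : ∀ X : V, ⟪X, N⟫ = 0 → η (S X) = α * η X)
    (Q : V → V) (hQ : ∀ X : V, Q X = (1 / 2 : ℝ) • (S (φ X) - φ (S X))) :
    ∀ X : V, ⟪X, N⟫ = 0 → φ (Q X) + Q (φ X) = 0 := by
  intro X hX
  obtain rfl : ξ = reebVector J N := hξ
  obtain rfl : φ = structureTensor J N :=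
    funext fun Y ↦ by rw [hφ, hη, structureTensor_apply]
  have hφφ {Y : V} (hY : ⟪Y, N⟫ = 0) :
      structureTensor J N (structureTensor J N Y) = -Y + η Y • reebVector J N := by
    rw [hJ.structureTensor_structureTensor hY, hη]
  have hQ_lie (Y : V) : Q Y = (1 / 2 : ℝ) • ⁅S, structureTensor J N⁆ Y := hQ Y
  rw [hQ_lie, hQ_lie, map_smul, ← smul_add,
    apply_lie_add_lie_apply_eq_zero_of_almostContact (hφφ hX) (hφφ (hST X hX)) hSξ (hηS X hX),
    smul_zero]

end Hypersurface

theorem stmt12 {V : Type*} [NormedAddCommGroup V] [InnerProductSpace ℝ V]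
    [FiniteDimensional ℝ V]
    (m : ℕ) (hm : 3 ≤ m) (hdim : Module.finrank ℝ V = 2 * m)
    (J : V →ₗ[ℝ] V)
    (hJiso : ∀ x y : V, ⟪J x, J y⟫ = ⟪x, y⟫)
    (hJ2 : ∀ x : V, J (J x) = -x)
    (N : V) (hN : ‖N‖ = 1)
    (ξ : V) (hξ : ξ = -(J N))
    (η : V → ℝ) (hη : ∀ X : V, η X = ⟪X, ξ⟫)
    (φ : V → V) (hφ : ∀ X : V, φ X = J X - η X • N)
    (S : V →ₗ[ℝ] V)
    (hST : ∀ X : V, ⟪X, N⟫ = 0 → ⟪S X, N⟫ = 0)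
    (hSsa : ∀ X Y : V, ⟪X, N⟫ = 0 → ⟪Y, N⟫ = 0 → ⟪S X, Y⟫ = ⟪X, S Y⟫)
    (α : ℝ) (hHopfξ : S ξ = α • ξ)
    (Q : V → V) (hQ : ∀ X : V, Q X = (1 / 2 : ℝ) • (S (φ X) - φ (S X))) :
    ∀ X : V, ⟪X, N⟫ = 0 → φ (Q X) + Q (φ X) = 0 := by
  have hJ : IsOrthogonalComplexStructure J := ⟨hJiso, hJ2⟩
  have hξN : ⟪ξ, N⟫ = 0 := hξ ▸ hJ.inner_reebVector_normal N
  exact stmt12_general J hJ N ξ hξ η hη φ hφ S hST α hHopfξ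
    (fun X hX ↦ by rw [hη, hη, hSsa X ξ hX hξN, hHopfξ, real_inner_smul_right]) Q hQ
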